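/- Let s ≥ 1 be a real number. There exists r₀ > 0 (depending on s) such that for all r ≥ r₀: inf_{p∈ℕ, p≥1} (2p)^{2ps} · r^{-2p} ≤ exp(−(s/(8e))·r^{1/s}). -/

import Mathlib

/-!
With `x = r ^ (1 / s)` one has `t ^ (t * s) * r ^ (-t) = (t / x) ^ (t * s)`, which is minimal at
`t = x / e`, with value `exp (-s * x / e)`. For `t ≤ x / e` it is still at most `exp (-s * t)`, and
rounding `x / e` down to a positive multiple of `a` loses less than a factor `2` as soon as
`a ≤ x / e`.
-/

section

variable {a r s t : ℝ}

lemma rpow_self_mul_mul_rpow_neg (ht : 0 ≤ t) (hr : 0 ≤ r) (hs : s ≠ 0) :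
    t ^ (t * s) * r ^ (-t) = (t / r ^ (1 / s)) ^ (t * s) := by
  have h_exponent : 1 / s * (t * s) = t := by field_simp
  rw [Real.div_rpow ht (Real.rpow_nonneg hr _), ← Real.rpow_mul hr, h_exponent,
    Real.rpow_neg hr, div_eq_mul_inv]

lemma rpow_self_mul_mul_rpow_neg_le_exp (ht : 0 ≤ t) (hr : 0 ≤ r) (hs : 0 < s)
    (h : t ≤ r ^ (1 / s) / Real.exp 1) :
    t ^ (t * s) * r ^ (-t) ≤ Real.exp (-(s * t)) := by
  have h_root : 0 ≤ r ^ (1 / s) := Real.rpow_nonneg hr _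
  have h_base : t / r ^ (1 / s) ≤ Real.exp (-1) := by
    refine div_le_of_le_mul₀ h_root (Real.exp_nonneg _) ?_
    rwa [Real.exp_neg, inv_mul_eq_div]
  calc t ^ (t * s) * r ^ (-t)
      = (t / r ^ (1 / s)) ^ (t * s) := rpow_self_mul_mul_rpow_neg ht hr hs.ne'
    _ ≤ Real.exp (-1) ^ (t * s) := by gcongr
    _ = Real.exp (-(s * t)) := by rw [← Real.exp_mul, neg_one_mul, mul_comm t]

lemma exists_pos_nat_mul_mem_Icc_half (ha : 0 < a) (hat : a ≤ t) :
    ∃ p : ℕ, 0 < p ∧ a * p ∈ Set.Icc (t / 2) t := by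
  have h_one : 1 ≤ t / a := (one_le_div ha).2 hat
  refine ⟨⌊t / a⌋₊, Nat.floor_pos.2 h_one, ?_, ?_⟩
  · calc t / 2 = a * (t / a / 2) := by field_simp
      _ ≤ a * ⌊t / a⌋₊ := by gcongr; exact (Nat.div_two_lt_floor h_one).le
  · exact (le_div_iff₀' ha).1 (Nat.floor_le (zero_le_one.trans h_one))

theorem stmt_3_general (ha : 0 < a) (hs : 0 < s) (hr : (a * Real.exp 1) ^ s ≤ r) :
    (⨅ p : {p : ℕ // 0 < p}, (a * p.1) ^ (a * p.1 * s) * r ^ (-(a * p.1)))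
      ≤ Real.exp (-(s / (2 * Real.exp 1)) * r ^ (1 / s)) := by
  have hr0 : 0 ≤ r := le_trans (by positivity) hr
  have h_step : a ≤ r ^ (1 / s) / Real.exp 1 := by
    rw [le_div_iff₀ (Real.exp_pos 1), one_div]
    exact (Real.le_rpow_inv_iff_of_pos (by positivity) hr0 hs).2 hr
  obtain ⟨p, hp, h_lower, h_upper⟩ := exists_pos_nat_mul_mem_Icc_half ha h_step
  have h_bdd : BddBelow (Set.range fun p : {p : ℕ // 0 < p} ↦
      (a * p.1) ^ (a * p.1 * s) * r ^ (-(a * p.1))) :=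
    ⟨0, Set.forall_mem_range.2 fun _ ↦ by positivity⟩
  refine ciInf_le_of_le h_bdd ⟨p, hp⟩ ?_
  calc (a * p) ^ (a * p * s) * r ^ (-(a * p))
      ≤ Real.exp (-(s * (a * p))) :=
        rpow_self_mul_mul_rpow_neg_le_exp (by positivity) hr0 hs h_upper
    _ ≤ Real.exp (-(s * (r ^ (1 / s) / Real.exp 1 / 2))) := by gcongr
    _ = Real.exp (-(s / (2 * Real.exp 1)) * r ^ (1 / s)) := by congr 1; field_simp

end

theorem stmt_3 (s : ℝ) (hs : 1 ≤ s) :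
    ∃ r₀ : ℝ, 0 < r₀ ∧ ∀ r : ℝ, r₀ ≤ r →
      (⨅ p : {p : ℕ // 0 < p},
          ((2 * p.1 : ℝ)) ^ ((2 * p.1 : ℝ) * s) * r ^ (-(2 * p.1 : ℝ)))
        ≤ Real.exp (-(s / (8 * Real.exp 1)) * r ^ (1 / s)) := by
  have hs0 : 0 < s := zero_lt_one.trans_le hs
  refine ⟨(2 * Real.exp 1) ^ s, by positivity, fun r hr ↦ ?_⟩
  have hr0 : 0 ≤ r := le_trans (by positivity) hr
  refine (stmt_3_general two_pos hs0 hr).trans ?_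
  gcongr
  norm_num
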